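/- For every f ∈ L¹[0,b] and every α ≥ 1, the function I^α f is absolutely continuous on [0,b], i.e. there exists φ ∈ L¹[0,b] such that I^α f(t) = I^α f(0) + ∫₀^t φ(s) ds for all t ∈ [0,b]; moreover I^α f(0) = 0. -/

import Mathlib

open MeasureTheory Set Filter Topology

open Classical in
/-- Riemann–Liouville fractional integral of order `α` with base point `0`;
`RL 0` is the identity operator. -/
noncomputable def RL (α : ℝ) (f : ℝ → ℝ) : ℝ → ℝ := fun t =>
  if α = 0 then f t
  else (1 / Real.Gamma α) * ∫ s in (0:ℝ)..t, (t - s) ^ (α - 1) * f s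

/-!
The density of `I^α f` is `I^(α-1) f`, which is `f` itself when `α = 1`. When `α > 1`, it agrees on
`(0,b]` with the convolution of two integrable functions, hence is integrable, and Fubini's theorem
on the triangle `0 < s < u < t` gives `∫₀ᵗ I^(α-1) f = I^α f(t)`, since a primitive of
`x ^ (α - 2) / Γ(α - 1)` is `x ^ (α - 1) / Γ(α)`.
-/

section TruncatedConvolution

variable {E E' F : Type*} [NormedAddCommGroup E] [NormedSpace ℝ E] [NormedAddCommGroup E']
  [NormedSpace ℝ E'] [NormedAddCommGroup F] [NormedSpace ℝ F]
  (L : E →L[ℝ] E' →L[ℝ] F) {f : ℝ → E} {g : ℝ → E'} {b : ℝ}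

theorem intervalIntegral_convolution_eq_setIntegral_indicator (f : ℝ → E) (g : ℝ → E') {u : ℝ}
    (hu : u ∈ Icc 0 b) :
    ∫ s in (0:ℝ)..u, L (f s) (g (u - s)) =
      ∫ s in Ioc 0 b, L (f s) ((Ioc 0 b).indicator g (u - s)) := by
  have hcut : ∀ s ∈ Ioc 0 b, L (f s) ((Ioc 0 b).indicator g (u - s)) =
      (Iio u).indicator (fun s => L (f s) (g (u - s))) s := by
    intro s hs
    by_cases hsu : s < u
    · have hmem : u - s ∈ Ioc 0 b := ⟨sub_pos.2 hsu, by linarith [hs.1, hu.2]⟩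
      rw [indicator_of_mem hmem, indicator_of_mem (mem_Iio.2 hsu)]
    · have hnot_mem : u - s ∉ Ioc 0 b := fun h => hsu (sub_pos.1 h.1)
      rw [indicator_of_notMem hnot_mem, indicator_of_notMem (notMem_Iio.2 (not_lt.1 hsu)), map_zero]
  have hinter : Ioc 0 b ∩ Iio u = Ioo 0 u := by
    ext s
    exact ⟨fun h => ⟨h.1.1, h.2⟩, fun h => ⟨⟨h.1, h.2.le.trans hu.2⟩, h.2⟩⟩
  rw [setIntegral_congr_fun measurableSet_Ioc hcut, setIntegral_indicator measurableSet_Iio,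
    hinter, intervalIntegral.integral_of_le hu.1, integral_Ioc_eq_integral_Ioo]

theorem integrable_convolution_integrand_indicator_Ioc (hf : IntegrableOn f (Ioc 0 b))
    (hg : IntegrableOn g (Ioc 0 b)) :
    Integrable (fun p : ℝ × ℝ => L (f p.2) ((Ioc 0 b).indicator g (p.1 - p.2)))
      (volume.prod (volume.restrict (Ioc 0 b))) :=
  Integrable.convolution_integrand L hf ((integrable_indicator_iff measurableSet_Ioc).2 hg)

theorem integrableOn_intervalIntegral_convolution (hf : IntegrableOn f (Ioc 0 b))
    (hg : IntegrableOn g (Ioc 0 b)) :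
    IntegrableOn (fun u => ∫ s in (0:ℝ)..u, L (f s) (g (u - s))) (Ioc 0 b) :=
  (integrable_convolution_integrand_indicator_Ioc L hf hg).integral_prod_left.integrableOn.congr_fun
    (fun _ hu => (intervalIntegral_convolution_eq_setIntegral_indicator L f g
      (Ioc_subset_Icc_self hu)).symm) measurableSet_Ioc

theorem setIntegral_indicator_Ioc_comp_sub (g : ℝ → E') {s : ℝ} (hs : s ∈ Icc 0 b) :
    ∫ u in Ioc 0 b, (Ioc 0 b).indicator g (u - s) = ∫ x in (0:ℝ)..b - s, g x := by
  have hinter : Ioc (0 - s) (b - s) ∩ Ioc 0 b = Ioc 0 (b - s) := by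
    rw [Ioc_inter_Ioc, max_eq_right (by linarith [hs.1]), min_eq_left (by linarith [hs.1])]
  rw [← intervalIntegral.integral_of_le (hs.1.trans hs.2),
    intervalIntegral.integral_comp_sub_right (fun x => (Ioc 0 b).indicator g x),
    intervalIntegral.integral_of_le (by linarith [hs.1, hs.2]),
    setIntegral_indicator measurableSet_Ioc, hinter,
    intervalIntegral.integral_of_le (sub_nonneg.2 hs.2)]

theorem integral_intervalIntegral_convolution [CompleteSpace E'] [CompleteSpace F] (hb : 0 ≤ b)
    (hf : IntegrableOn f (Ioc 0 b)) (hg : IntegrableOn g (Ioc 0 b)) :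
    ∫ u in (0:ℝ)..b, ∫ s in (0:ℝ)..u, L (f s) (g (u - s)) =
      ∫ s in (0:ℝ)..b, L (f s) (∫ x in (0:ℝ)..b - s, g x) := by
  have hg_shift (s : ℝ) : Integrable (fun u => (Ioc 0 b).indicator g (u - s)) :=
    ((integrable_indicator_iff measurableSet_Ioc).2 hg).comp_sub_right s
  have hfubini : Integrable (fun p : ℝ × ℝ => L (f p.2) ((Ioc 0 b).indicator g (p.1 - p.2)))
      ((volume.restrict (Ioc 0 b)).prod (volume.restrict (Ioc 0 b))) :=
    (integrable_convolution_integrand_indicator_Ioc L hf hg).mono_measure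
      (Measure.prod_mono Measure.restrict_le_self le_rfl)
  rw [intervalIntegral.integral_of_le hb, intervalIntegral.integral_of_le hb]
  calc ∫ u in Ioc 0 b, ∫ s in (0:ℝ)..u, L (f s) (g (u - s))
      = ∫ u in Ioc 0 b, ∫ s in Ioc 0 b, L (f s) ((Ioc 0 b).indicator g (u - s)) :=
        setIntegral_congr_fun measurableSet_Ioc fun u hu =>
          intervalIntegral_convolution_eq_setIntegral_indicator L f g (Ioc_subset_Icc_self hu)
    _ = ∫ s in Ioc 0 b, ∫ u in Ioc 0 b, L (f s) ((Ioc 0 b).indicator g (u - s)) :=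
        integral_integral_swap hfubini
    _ = ∫ s in Ioc 0 b, L (f s) (∫ u in Ioc 0 b, (Ioc 0 b).indicator g (u - s)) := by
        simp_rw [(L (f _)).integral_comp_comm (hg_shift _).integrableOn]
    _ = ∫ s in Ioc 0 b, L (f s) (∫ x in (0:ℝ)..b - s, g x) :=
        setIntegral_congr_fun measurableSet_Ioc fun s hs =>
          congrArg (L (f s)) (setIntegral_indicator_Ioc_comp_sub g (Ioc_subset_Icc_self hs))

end TruncatedConvolution

section RiemannLiouville

variable {α b : ℝ} {f : ℝ → ℝ}

theorem RL_zero (f : ℝ → ℝ) : RL 0 f = f := by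
  ext t
  exact if_pos rfl

theorem RL_one (f : ℝ → ℝ) (t : ℝ) : RL 1 f t = ∫ s in (0:ℝ)..t, f s := by
  simp [RL]

theorem RL_eq_intervalIntegral_convolution (hα : α ≠ 0) (f : ℝ → ℝ) :
    RL α f = fun t => (1 / Real.Gamma α) *
      ∫ s in (0:ℝ)..t, ContinuousLinearMap.mul ℝ ℝ (f s) ((t - s) ^ (α - 1)) := by
  ext t
  simp only [RL, if_neg hα, ContinuousLinearMap.mul_apply', mul_comm]

theorem RL_apply_zero (hα : α ≠ 0) (f : ℝ → ℝ) : RL α f 0 = 0 := by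
  simp [RL, hα]

theorem integrableOn_Ioc_rpow_sub_one (hα : 0 < α) (b : ℝ) :
    IntegrableOn (fun x : ℝ => x ^ (α - 1)) (Ioc 0 b) :=
  (intervalIntegral.intervalIntegrable_rpow' (by linarith)).1

theorem integrableOn_RL (hα : 0 ≤ α) (hf : IntegrableOn f (Ioc 0 b)) :
    IntegrableOn (RL α f) (Ioc 0 b) := by
  rcases hα.eq_or_lt with rfl | hα
  · rwa [RL_zero]
  · rw [RL_eq_intervalIntegral_convolution hα.ne']
    exact (integrableOn_intervalIntegral_convolution _ hf
      (integrableOn_Ioc_rpow_sub_one hα b)).integrable.const_mul _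

theorem RL_add_one (hα : 0 ≤ α) (hb : 0 ≤ b) (hf : IntegrableOn f (Ioc 0 b)) :
    RL (α + 1) f b = ∫ t in (0:ℝ)..b, RL α f t := by
  rcases hα.eq_or_lt with rfl | hα
  · rw [zero_add, RL_one, RL_zero]
  have hprimitive (s : ℝ) : ∫ x in (0:ℝ)..b - s, x ^ (α - 1) = (b - s) ^ α / α := by
    rw [integral_rpow (Or.inl (by linarith)), sub_add_cancel, Real.zero_rpow hα.ne', sub_zero]
  have hα1 : α + 1 ≠ 0 := by positivity
  symm
  rw [RL_eq_intervalIntegral_convolution hα.ne', RL_eq_intervalIntegral_convolution hα1,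
    intervalIntegral.integral_const_mul,
    integral_intervalIntegral_convolution _ hb hf (integrableOn_Ioc_rpow_sub_one hα b)]
  simp_rw [hprimitive, ContinuousLinearMap.mul_apply', mul_div_assoc']
  rw [intervalIntegral.integral_div, Real.Gamma_add_one hα.ne', add_sub_cancel_right]
  field_simp

end RiemannLiouville

/-- For `f ∈ L¹[0,b]` and `α ≥ 1`, `I^α f` is absolutely continuous on `[0,b]`
and `I^α f(0) = 0`. -/
theorem RL_absolutelyContinuous (b : ℝ) (hb : 0 < b) (α : ℝ) (hα : 1 ≤ α) (f : ℝ → ℝ)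
    (hf : IntegrableOn f (Set.Icc 0 b) volume) :
    (∃ φ : ℝ → ℝ, IntegrableOn φ (Set.Icc 0 b) volume ∧
      ∀ t ∈ Set.Icc (0:ℝ) b, RL α f t = RL α f 0 + ∫ s in (0:ℝ)..t, φ s) ∧
    RL α f 0 = 0 := by
  have hα' : 0 ≤ α - 1 := sub_nonneg.2 hα
  have hzero : RL α f 0 = 0 := RL_apply_zero (by positivity) f
  rw [integrableOn_Icc_iff_integrableOn_Ioc] at hf
  refine ⟨⟨RL (α - 1) f, ?_, fun t ht => ?_⟩, hzero⟩
  · rw [integrableOn_Icc_iff_integrableOn_Ioc]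
    exact integrableOn_RL hα' hf
  · have hft : IntegrableOn f (Ioc 0 t) := hf.mono_set (Ioc_subset_Ioc_right ht.2)
    rw [hzero, zero_add, ← RL_add_one hα' ht.1 hft, sub_add_cancel]
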